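/- arXiv:1803.04174 — 3 statements merged into one kernel-verified Lean document; each statement's English description precedes it below -/
import Mathlib

section
/- Let p_1 < p_2 < ... < p_n be positive real numbers and let B be the n×n matrix with (i,j) entry (p_i + p_j)^(p_i + p_j). Then B is positive definite: ⟨x, Bx⟩ > 0 for every nonzero vector x ∈ ℝ^n. -/
open MeasureTheory Set Real in
lemma aux_exp_lint {b : ℝ} (hb : 0 < b) :
    ∫⁻ s in Ioi (0:ℝ), ENNReal.ofReal (exp (-(b * s))) = ENNReal.ofReal (1 / b) := by
  have h := integral_exp_mul_Ioi (a := -b) (by linarith) 0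
  have hi := integrableOn_exp_mul_Ioi (a := -b) (by linarith) 0
  rw [← ofReal_integral_eq_lintegral_ofReal]
  · congr 1
    simp only [neg_mul] at h
    rw [h]; simp
  · simpa only [neg_mul, IntegrableOn] using hi
  · exact Filter.Eventually.of_forall fun s => (exp_pos _).le

open MeasureTheory Set Real in
lemma aux_exp_inner {s : ℝ} (hs : 0 < s) {a c : ℝ} (hac : a ≤ c) :
    ∫⁻ b in Ioc a c, ENNReal.ofReal (exp (-(b * s)))
      = ENNReal.ofReal ((exp (-(a * s)) - exp (-(c * s))) / s) := by
  have hcont : Continuous fun b : ℝ => exp (-(b * s)) := by fun_prop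
  rw [← ofReal_integral_eq_lintegral_ofReal]
  · rw [← intervalIntegral.integral_of_le hac]
    congr 1
    rw [intervalIntegral.integral_eq_sub_of_hasDerivAt (f := fun b => -exp (-(b * s)) / s)]
    · ring
    · intro b _
      have h1 : HasDerivAt (fun b : ℝ => -(b * s)) (-(1 * s)) b :=
        ((hasDerivAt_id b).mul_const s).neg
      have h2 := (h1.exp.neg).div_const s
      have h3 : -(exp (-(b * s)) * -(1 * s)) / s = exp (-(b * s)) := by field_simp
      rw [h3] at h2
      exact h2
    · exact hcont.intervalIntegrable _ _
  · exact hcont.integrableOn_Ioc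
  · exact Filter.Eventually.of_forall fun s => (exp_pos _).le

open MeasureTheory Set Real in
lemma aux_L1 {a y : ℝ} (ha : 0 < a) (hy : 0 < y) :
    ∫⁻ s in Ioi (0:ℝ), ENNReal.ofReal ((exp (-(a * s)) - exp (-((a + y) * s))) / s)
      = ENNReal.ofReal (log (a + y) - log a) := by
  have e1 : ∫⁻ s in Ioi (0:ℝ), ENNReal.ofReal ((exp (-(a * s)) - exp (-((a + y) * s))) / s)
      = ∫⁻ s in Ioi (0:ℝ), ∫⁻ b in Ioc a (a + y), ENNReal.ofReal (exp (-(b * s))) := by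
    refine setLIntegral_congr_fun measurableSet_Ioi fun s hs => ?_
    exact (aux_exp_inner hs (by linarith)).symm
  rw [e1, lintegral_lintegral_swap (by
    apply Measurable.aemeasurable
    unfold Function.uncurry
    fun_prop)]
  have e2 : ∫⁻ b in Ioc a (a + y), ∫⁻ s in Ioi (0:ℝ), ENNReal.ofReal (exp (-(b * s)))
      = ∫⁻ b in Ioc a (a + y), ENNReal.ofReal (1 / b) := by
    refine setLIntegral_congr_fun measurableSet_Ioc fun b hb => ?_
    exact aux_exp_lint (ha.trans hb.1)
  rw [e2, ← ofReal_integral_eq_lintegral_ofReal]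
  · rw [← intervalIntegral.integral_of_le (by linarith), integral_one_div_of_pos ha (by linarith),
      log_div (by positivity) (by positivity)]
  · have : IntervalIntegrable (fun b : ℝ => 1 / b) volume a (a + y) := by
      apply intervalIntegral.intervalIntegrable_one_div
      · intro b hb
        rw [uIcc_of_le (by linarith)] at hb
        linarith [hb.1]
      · exact continuousOn_id
    exact (intervalIntegrable_iff_integrableOn_Ioc_of_le (by linarith)).1 this
  · refine (ae_restrict_iff' measurableSet_Ioc).2 (Filter.Eventually.of_forall fun b hb => ?_)
    have : 0 < b := ha.trans hb.1
    simp only [Pi.zero_apply]; positivity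

/-- the feature function -/
noncomputable def auxF (x s : ℝ) : ℝ := (1 - Real.exp (-(x * s))) / s

open MeasureTheory Set Real in
lemma aux_L2 {x y : ℝ} (hx : 0 < x) (hy : 0 < y) :
    ∫⁻ s in Ioi (0:ℝ), ENNReal.ofReal (auxF x s * auxF y s)
      = ENNReal.ofReal ((x + y) * log (x + y) - x * log x - y * log y) := by
  have e1 : ∫⁻ s in Ioi (0:ℝ), ENNReal.ofReal (auxF x s * auxF y s)
      = ∫⁻ s in Ioi (0:ℝ), ∫⁻ a in Ioc 0 x,
        ENNReal.ofReal ((exp (-(a * s)) - exp (-((a + y) * s))) / s) := by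
    refine setLIntegral_congr_fun measurableSet_Ioi fun s hs => ?_
    have hs' : 0 < s := hs
    have hF : ∀ z : ℝ, 0 < z → 0 ≤ auxF z s := fun z hz => by
      unfold auxF
      apply div_nonneg _ hs'.le
      rw [sub_nonneg, exp_le_one_iff]
      have := mul_pos hz hs'
      linarith
    rw [ENNReal.ofReal_mul (hF x hx)]
    have h1 := aux_exp_inner hs hx.le
    have h2 : auxF x s = (exp (-(0 * s)) - exp (-(x * s))) / s := by simp [auxF]
    rw [h2, ← h1, ← lintegral_mul_const _ (by fun_prop)]
    refine lintegral_congr fun a => ?_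
    rw [← ENNReal.ofReal_mul (exp_pos _).le]
    congr 1
    unfold auxF
    rw [show -((a + y) * s) = -(a * s) + -(y * s) by ring, exp_add]
    ring
  rw [e1, lintegral_lintegral_swap (by
    apply Measurable.aemeasurable
    unfold Function.uncurry
    fun_prop)]
  have e2 : ∫⁻ a in Ioc 0 x, ∫⁻ s in Ioi (0:ℝ),
        ENNReal.ofReal ((exp (-(a * s)) - exp (-((a + y) * s))) / s)
      = ∫⁻ a in Ioc 0 x, ENNReal.ofReal (log (a + y) - log a) := by
    refine setLIntegral_congr_fun measurableSet_Ioc fun b hb => ?_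
    exact aux_L1 hb.1 hy
  have i1 : IntervalIntegrable (fun a : ℝ => log (a + y)) volume 0 x := by
    have : IntervalIntegrable log volume (0 + y) (x + y) := intervalIntegral.intervalIntegrable_log'
    simpa using this.comp_add_right y
  have i2 : IntervalIntegrable (fun a : ℝ => log a) volume 0 x :=
    intervalIntegral.intervalIntegrable_log'
  rw [e2, ← ofReal_integral_eq_lintegral_ofReal]
  · rw [← intervalIntegral.integral_of_le hx.le, intervalIntegral.integral_sub i1 i2,
      intervalIntegral.integral_comp_add_right (fun a => log a), integral_log, integral_log]
    congr 1
    simp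
    ring
  · exact (intervalIntegrable_iff_integrableOn_Ioc_of_le hx.le).1 (i1.sub i2)
  · refine (ae_restrict_iff' measurableSet_Ioc).2 (Filter.Eventually.of_forall fun b hb => ?_)
    simp only [Pi.zero_apply, sub_nonneg]
    exact log_le_log hb.1 (by linarith)

open MeasureTheory Set Real in
lemma auxF_nonneg {x : ℝ} (hx : 0 < x) {s : ℝ} (hs : 0 < s) : 0 ≤ auxF x s := by
  unfold auxF
  apply div_nonneg _ hs.le
  rw [sub_nonneg, exp_le_one_iff]
  have := mul_pos hx hs
  linarith

open MeasureTheory Set Real in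
lemma auxF_cont (x : ℝ) : ContinuousOn (auxF x) (Ioi 0) := by
  unfold auxF
  apply ContinuousOn.div (by fun_prop) (by fun_prop)
  intro s hs
  exact ne_of_gt hs

open MeasureTheory Set Real in
lemma aux_meas (x : ℝ) : Measurable (auxF x) := by
  unfold auxF
  fun_prop

open MeasureTheory Set Real in
lemma aux_ae {x y : ℝ} (hx : 0 < x) (hy : 0 < y) :
    0 ≤ᵐ[volume.restrict (Ioi (0:ℝ))] fun s => auxF x s * auxF y s :=
  (ae_restrict_iff' measurableSet_Ioi).2 (Filter.Eventually.of_forall fun _ hb =>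
    mul_nonneg (auxF_nonneg hx hb) (auxF_nonneg hy hb))

open MeasureTheory Set Real in
lemma aux_integrable {x y : ℝ} (hx : 0 < x) (hy : 0 < y) :
    IntegrableOn (fun s => auxF x s * auxF y s) (Ioi 0) := by
  have := aux_meas x
  have := aux_meas y
  refine (lintegral_ofReal_ne_top_iff_integrable (Measurable.aestronglyMeasurable (by fun_prop))
    (aux_ae hx hy)).1 ?_
  rw [aux_L2 hx hy]
  exact ENNReal.ofReal_ne_top

open MeasureTheory Set Real in
lemma aux_integral {x y : ℝ} (hx : 0 < x) (hy : 0 < y) :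
    ∫ s in Ioi (0:ℝ), auxF x s * auxF y s = (x + y) * log (x + y) - x * log x - y * log y := by
  have := aux_meas x
  have := aux_meas y
  rw [integral_eq_lintegral_of_nonneg_ae (aux_ae hx hy)
    (Measurable.aestronglyMeasurable (by fun_prop)), aux_L2 hx hy, ENNReal.toReal_ofReal]
  have h1 : log x ≤ log (x + y) := log_le_log hx (by linarith)
  have h2 : log y ≤ log (x + y) := log_le_log hy (by linarith)
  nlinarith

lemma aux_indep {n : ℕ} {p : Fin n → ℝ} (hpos : ∀ i, 0 < p i) (hp : Function.Injective p)
    {v : Fin n → ℝ} (h : ∀ s : ℝ, 0 < s → ∑ i, v i * auxF (p i) s = 0) : v = 0 := by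
  have key : (Fin.cons (-∑ i, v i) v : Fin (n+1) → ℝ) = 0 := by
    apply Matrix.eq_zero_of_forall_pow_sum_mul_pow_eq_zero
      (f := (Fin.cons 1 (fun i => Real.exp (-(p i))) : Fin (n+1) → ℝ))
    · rw [Fin.cons_injective_iff]
      constructor
      · rintro ⟨i, hi⟩
        have := hpos i
        simp at hi
        linarith
      · intro i j hij
        apply hp
        simpa using hij
    · intro k
      rw [Fin.sum_univ_succ]
      simp only [Fin.cons_zero, Fin.cons_succ, one_pow, mul_one]
      rcases Nat.eq_zero_or_pos (k : ℕ) with hk | hk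
      · simp [hk]
      · have hk' : (0:ℝ) < (k : ℕ) := by exact_mod_cast hk
        have := h _ hk'
        simp only [auxF, mul_div_assoc'] at this
        rw [← Finset.sum_div, div_eq_zero_iff] at this
        have := this.resolve_right hk'.ne'
        simp only [mul_sub, mul_one, Finset.sum_sub_distrib] at this
        have e : ∀ i, Real.exp (-(p i)) ^ (k : ℕ) = Real.exp (-(p i * (k : ℕ))) := fun i => by
          rw [← Real.exp_nat_mul]; congr 1; ring
        simp only [e]
        linarith
  funext i
  simpa using congrFun key i.succ

/-- logarithmic Gram matrix -/
noncomputable def auxA {n : ℕ} (p : Fin n → ℝ) : Matrix (Fin n) (Fin n) ℝ :=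
  Matrix.of fun i j => (p i + p j) * Real.log (p i + p j) - p i * Real.log (p i)
    - p j * Real.log (p j)

lemma aux_quad {n : ℕ} (M : Matrix (Fin n) (Fin n) ℝ) (x : Fin n → ℝ) :
    star x ⬝ᵥ (M.mulVec x) = ∑ i, ∑ j, x i * x j * M i j := by
  simp only [dotProduct, Matrix.mulVec, Pi.star_apply, star_trivial, Finset.mul_sum]
  refine Finset.sum_congr rfl fun i _ => Finset.sum_congr rfl fun j _ => by ring

open MeasureTheory Set in
lemma auxA_posDef {n : ℕ} {p : Fin n → ℝ} (hpos : ∀ i, 0 < p i) (hp : Function.Injective p) :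
    (auxA p).PosDef := by
  refine Matrix.PosDef.of_dotProduct_mulVec_pos ?_ ?_
  · ext i j
    simp only [auxA, Matrix.conjTranspose_apply, Matrix.of_apply, star_trivial]
    rw [add_comm (p j)]; ring
  · intro x hx
    rw [aux_quad]
    have hint : ∀ i j, IntegrableOn (fun s => x i * x j * (auxF (p i) s * auxF (p j) s)) (Ioi 0) :=
      fun i j => (aux_integrable (hpos i) (hpos j)).const_mul _
    have hsq : ∀ s, (∑ i, x i * auxF (p i) s) ^ 2
        = ∑ i, ∑ j, x i * x j * (auxF (p i) s * auxF (p j) s) := fun s => by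
      rw [sq, Finset.sum_mul_sum]
      refine Finset.sum_congr rfl fun i _ => Finset.sum_congr rfl fun j _ => by ring
    have e : ∑ i, ∑ j, x i * x j * auxA p i j
        = ∫ s in Ioi (0:ℝ), (∑ i, x i * auxF (p i) s) ^ 2 := by
      simp only [hsq]
      rw [integral_finsetSum _ fun i _ => integrable_finsetSum _ fun j _ => hint i j]
      refine Finset.sum_congr rfl fun i _ => ?_
      rw [integral_finsetSum _ fun j _ => hint i j]
      refine Finset.sum_congr rfl fun j _ => ?_
      rw [integral_const_mul, aux_integral (hpos i) (hpos j)]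
      rfl
    have hI : IntegrableOn (fun s => (∑ i, x i * auxF (p i) s) ^ 2) (Ioi 0) := by
      simp only [hsq]
      exact integrable_finsetSum _ fun i _ => integrable_finsetSum _ fun j _ => hint i j
    rw [e]
    refine (integral_nonneg fun s => sq_nonneg _).lt_of_ne' fun h0 => hx ?_
    rw [integral_eq_zero_iff_of_nonneg (fun s => sq_nonneg _) hI] at h0
    have hc : ContinuousOn (fun s => (∑ i, x i * auxF (p i) s) ^ 2) (Ioi 0) := by
      apply ContinuousOn.pow
      exact continuousOn_finsetSum _ fun i _ => continuousOn_const.mul (auxF_cont _)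
    have h1 := Measure.eqOn_open_of_ae_eq h0 isOpen_Ioi hc continuousOn_const
    refine aux_indep hpos hp fun s hs => ?_
    have := h1 hs
    simpa using this

lemma aux_pow_psd {n : ℕ} {A : Matrix (Fin n) (Fin n) ℝ} (hA : A.PosSemidef) (k : ℕ) :
    (Matrix.of fun i j => A i j ^ k : Matrix (Fin n) (Fin n) ℝ).PosSemidef := by
  induction k with
  | zero =>
    convert Matrix.posSemidef_vecMulVec_self_star (fun _ : Fin n => (1:ℝ)) using 1
    ext i j
    simp [Matrix.vecMulVec_apply]
  | succ k ih =>
    have h : (Matrix.of fun i j => A i j ^ (k + 1)) = (Matrix.of fun i j => A i j ^ k).hadamard A := by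
      ext i j
      simp [pow_succ]
    rw [h]
    exact ih.hadamard hA

lemma aux_exp_pd {n : ℕ} {A : Matrix (Fin n) (Fin n) ℝ} (hA : A.PosDef) {x : Fin n → ℝ}
    (hx : x ≠ 0) : 0 < ∑ i, ∑ j, x i * x j * Real.exp (A i j) := by
  have hs : HasSum (fun k : ℕ => ∑ i, ∑ j, x i * x j * (A i j ^ k / (k.factorial : ℝ)))
      (∑ i, ∑ j, x i * x j * Real.exp (A i j)) := by
    refine hasSum_sum fun i _ => hasSum_sum fun j _ => HasSum.mul_left _ ?_
    rw [Real.exp_eq_exp_ℝ]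
    exact NormedSpace.expSeries_div_hasSum_exp _
  have hnn : ∀ k : ℕ, 0 ≤ ∑ i, ∑ j, x i * x j * (A i j ^ k / (k.factorial : ℝ)) := fun k => by
    have h := (aux_pow_psd hA.posSemidef k).dotProduct_mulVec_nonneg x
    rw [aux_quad] at h
    simp only [mul_div_assoc', ← Finset.sum_div]
    exact div_nonneg h (by positivity)
  have h1 := le_hasSum hs 1 fun k _ => hnn k
  have h2 := hA.dotProduct_mulVec_pos hx
  rw [aux_quad] at h2
  refine h2.trans_le (le_trans (le_of_eq ?_) h1)
  simp

/-- The matrix `[(pᵢ + pⱼ)^(pᵢ + pⱼ)]` is positive definite. -/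
theorem stmt_2 (n : ℕ) (p : Fin n → ℝ) (hpos : ∀ i, 0 < p i) (hmono : StrictMono p) :
    Matrix.PosDef (Matrix.of fun i j : Fin n => (p i + p j) ^ (p i + p j)) := by
  refine Matrix.PosDef.of_dotProduct_mulVec_pos ?_ ?_
  · ext i j
    simp only [Matrix.conjTranspose_apply, Matrix.of_apply, star_trivial]
    rw [add_comm (p j)]
  · intro x hx
    rw [aux_quad]
    have hA := auxA_posDef hpos hmono.injective
    have hy : (fun i => x i * Real.exp (p i * Real.log (p i))) ≠ 0 := by
      intro h
      apply hx
      funext i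
      simpa [Real.exp_ne_zero] using congrFun h i
    refine (aux_exp_pd hA hy).trans_le (le_of_eq ?_)
    refine Finset.sum_congr rfl fun i _ => Finset.sum_congr rfl fun j _ => ?_
    have hij : 0 < p i + p j := add_pos (hpos i) (hpos j)
    have : (p i + p j) ^ (p i + p j) = Real.exp (p i * Real.log (p i))
        * Real.exp (p j * Real.log (p j)) * Real.exp (auxA p i j) := by
      rw [Real.rpow_def_of_pos hij, ← Real.exp_add, ← Real.exp_add]
      congr 1
      simp only [auxA, Matrix.of_apply]
      ring
    rw [Matrix.of_apply, this]
    ring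
end

section
/- Let p_1 < p_2 < ... < p_n be positive real numbers. Then the n×n matrix C with (i,j) entry (p_i + p_j) · log(p_i + p_j) is conditionally positive definite. -/
open Matrix

open Filter Topology in
lemma aux_nonneg (f f' : ℝ → ℝ) (hd : ∀ t, 0 < t → HasDerivAt f (f' t) t)
    (hf : ∀ t, 0 < t → f' t ≤ 0) (hl : Tendsto f atTop (𝓝 0)) (t : ℝ) (ht : 0 < t) :
    0 ≤ f t := by
  have hanti : AntitoneOn f (Set.Ioi 0) := by
    apply antitoneOn_of_deriv_nonpos (convex_Ioi 0)
    · intro t ht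
      exact (hd t ht).continuousAt.continuousWithinAt
    · intro t ht
      rw [interior_Ioi] at ht
      exact (hd t ht).differentiableAt.differentiableWithinAt
    · intro t ht
      rw [interior_Ioi] at ht
      rw [(hd t ht).deriv]
      exact hf t ht
  refine le_of_tendsto hl ?_
  filter_upwards [eventually_ge_atTop t] with u hu
  exact hanti ht (lt_of_lt_of_le ht hu) hu

open Filter Topology in
lemma aux_cauchy (n : ℕ) (p x : Fin n → ℝ) (hpos : ∀ i, 0 < p i) :
    0 ≤ ∑ i, ∑ j, x i * x j * (p i + p j)⁻¹ := by
  have key : ∀ t : ℝ, 0 < t →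
      0 ≤ ∑ i, ∑ j, x i * x j * ((p i + p j)⁻¹ * Real.exp (-(p i + p j) * t)) := by
    apply aux_nonneg _ (fun t => ∑ i, ∑ j, x i * x j *
      ((p i + p j)⁻¹ * (Real.exp (-(p i + p j) * t) * (-(p i + p j) * 1))))
    · intro t _
      refine HasDerivAt.fun_sum fun i _ => HasDerivAt.fun_sum fun j _ => ?_
      exact ((((hasDerivAt_id t).const_mul _).exp).const_mul _).const_mul _
    · intro t _
      have : ∑ i, ∑ j, x i * x j *
          ((p i + p j)⁻¹ * (Real.exp (-(p i + p j) * t) * (-(p i + p j) * 1)))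
          = - ((∑ i, x i * Real.exp (-p i * t)) * ∑ j, x j * Real.exp (-p j * t)) := by
        rw [Finset.sum_mul_sum, ← Finset.sum_neg_distrib]
        refine Finset.sum_congr rfl fun i _ => ?_
        rw [← Finset.sum_neg_distrib]
        refine Finset.sum_congr rfl fun j _ => ?_
        have h : p i + p j ≠ 0 := (add_pos (hpos i) (hpos j)).ne'
        have e : Real.exp (-(p i + p j) * t) = Real.exp (-p i * t) * Real.exp (-p j * t) := by
          rw [← Real.exp_add]; congr 1; ring
        rw [e]
        field_simp
      rw [this]
      exact neg_nonpos.2 (mul_self_nonneg _)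
    · have : (0:ℝ) = ∑ i : Fin n, ∑ j : Fin n, x i * x j * ((p i + p j)⁻¹ * 0) := by simp
      rw [this]
      refine tendsto_finsetSum _ fun i _ => tendsto_finsetSum _ fun j _ => ?_
      refine (Tendsto.const_mul _ ?_).const_mul _
      refine Real.tendsto_exp_atBot.comp ?_
      exact tendsto_id.const_mul_atTop_of_neg (neg_lt_zero.2 (add_pos (hpos i) (hpos j)))
  have hc : Continuous fun t : ℝ =>
      ∑ i, ∑ j, x i * x j * ((p i + p j)⁻¹ * Real.exp (-(p i + p j) * t)) := by fun_prop
  have h0 := (hc.tendsto 0).mono_left (nhdsWithin_le_nhds (s := Set.Ioi 0))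
  have := ge_of_tendsto h0 (eventually_nhdsWithin_of_forall fun t ht => key t ht)
  simpa using this

lemma aux_const (n : ℕ) (x : Fin n → ℝ) (hx : ∑ i, x i = 0) (c : ℝ) :
    ∑ i, ∑ j, x i * x j * c = 0 := by
  simp [← Finset.sum_mul, ← Finset.mul_sum, hx]

lemma aux_lin (n : ℕ) (p x : Fin n → ℝ) (hx : ∑ i, x i = 0) :
    ∑ i, ∑ j, x i * x j * (p i + p j) = 0 := by
  have : ∀ i j, x i * x j * (p i + p j) = x i * p i * x j + x i * (x j * p j) := by
    intros; ring
  simp only [this, Finset.sum_add_distrib, ← Finset.mul_sum, ← Finset.sum_mul, hx]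
  simp

open Filter Topology in
lemma aux_log (s : ℝ) : Tendsto (fun t : ℝ => Real.log (1 + s / t)) atTop (𝓝 0) := by
  have h : Tendsto (fun t : ℝ => 1 + s / t) atTop (𝓝 (1 + 0)) :=
    (tendsto_const_nhds.div_atTop tendsto_id).const_add 1
  rw [add_zero] at h
  simpa using h.log one_ne_zero

lemma aux_split (s t : ℝ) (hs : 0 < s) (ht : 0 < t) :
    Real.log (s + t) = Real.log (1 + s / t) + Real.log t := by
  rw [← Real.log_mul (by positivity) ht.ne']
  congr 1
  field_simp
  ring

open Filter Topology in
lemma aux_deriv (n : ℕ) (p x : Fin n → ℝ) (hpos : ∀ i, 0 < p i) (hx : ∑ i, x i = 0)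
    (t : ℝ) (ht : 0 < t) :
    0 ≤ -∑ i, ∑ j, x i * x j * (Real.log (p i + p j + t)) := by
  revert t
  apply aux_nonneg _ (fun t => -∑ i, ∑ j, x i * x j * (1 / (p i + p j + t)))
  · intro t ht
    refine HasDerivAt.fun_neg ?_
    refine HasDerivAt.fun_sum fun i _ => HasDerivAt.fun_sum fun j _ => ?_
    have h : p i + p j + t ≠ 0 := (add_pos (add_pos (hpos i) (hpos j)) ht).ne'
    exact (((hasDerivAt_id t).const_add _).log h).const_mul _
  · intro t ht
    have := aux_cauchy n (fun i => p i + t / 2) x fun i => add_pos (hpos i) (half_pos ht)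
    rw [neg_nonpos]
    convert this using 6
    rw [one_div]
    congr 1
    ring
  · have h0 : (0:ℝ) = -∑ i : Fin n, ∑ j : Fin n, x i * x j * 0 := by simp
    rw [h0]
    have : Tendsto (fun t : ℝ => -∑ i, ∑ j, x i * x j * (Real.log (1 + (p i + p j) / t))) atTop
        (𝓝 (-∑ i : Fin n, ∑ j : Fin n, x i * x j * 0)) := by
      refine Tendsto.neg ?_
      refine tendsto_finsetSum _ fun i _ => tendsto_finsetSum _ fun j _ => ?_
      exact (aux_log _).const_mul _
    refine this.congr' ?_
    filter_upwards [eventually_gt_atTop 0] with t ht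
    simp only [fun i j => aux_split (p i + p j) t (add_pos (hpos i) (hpos j)) ht, mul_add (_ * _) (Real.log _),
      Finset.sum_add_distrib]
    rw [aux_const n x hx, add_zero]

open Filter Topology in
lemma aux_main (n : ℕ) (p x : Fin n → ℝ) (hpos : ∀ i, 0 < p i) (hx : ∑ i, x i = 0)
    (t : ℝ) (ht : 0 < t) :
    0 ≤ ∑ i, ∑ j, x i * x j * ((p i + p j + t) * Real.log (p i + p j + t)) := by
  revert t
  apply aux_nonneg _ (fun t => ∑ i, ∑ j, x i * x j * (Real.log (p i + p j + t) + 1))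
  · intro t ht
    refine HasDerivAt.fun_sum fun i _ => HasDerivAt.fun_sum fun j _ => ?_
    have h : p i + p j + t ≠ 0 := (add_pos (add_pos (hpos i) (hpos j)) ht).ne'
    have h1 := (hasDerivAt_id t).const_add (p i + p j)
    have h2 := (Real.hasDerivAt_mul_log h).comp t h1
    rw [mul_one] at h2
    exact h2.const_mul _
  · intro t ht
    simp only [mul_add (_ * _) (Real.log _), Finset.sum_add_distrib]
    rw [aux_const n x hx, add_zero]
    exact neg_nonneg.1 (aux_deriv n p x hpos hx t ht)
  · have h0 : (0:ℝ) = ∑ i : Fin n, ∑ j : Fin n,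
        x i * x j * ((p i + p j) * 0 + (p i + p j)) := by
      simp [aux_lin n p x hx]
    rw [h0]
    have : Tendsto (fun t : ℝ => ∑ i, ∑ j, x i * x j *
        ((p i + p j) * (Real.log (1 + (p i + p j) / t)) + t * Real.log (1 + (p i + p j) / t))) atTop
        (𝓝 (∑ i : Fin n, ∑ j : Fin n, x i * x j * ((p i + p j) * 0 + (p i + p j)))) := by
      refine tendsto_finsetSum _ fun i _ => tendsto_finsetSum _ fun j _ => ?_
      exact (((aux_log _).const_mul _).add
        (Real.tendsto_mul_log_one_add_div_atTop _)).const_mul _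
    refine this.congr' ?_
    filter_upwards [eventually_gt_atTop 0] with t ht
    have e : ∀ i j, x i * x j * ((p i + p j + t) * Real.log (p i + p j + t)) =
        x i * x j * ((p i + p j) * (Real.log (1 + (p i + p j) / t))
          + t * Real.log (1 + (p i + p j) / t)) + x i * x j * (p i + p j) * Real.log t
          + x i * x j * (t * Real.log t) := by
      intro i j
      rw [aux_split (p i + p j) t (add_pos (hpos i) (hpos j)) ht]
      ring
    simp only [e, Finset.sum_add_distrib]
    rw [aux_const n x hx, add_zero]
    simp only [← Finset.sum_mul]
    rw [aux_lin n p x hx, zero_mul, add_zero]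

/-- The matrix `[(pᵢ + pⱼ) log (pᵢ + pⱼ)]` is conditionally positive definite. -/
theorem stmt_5 (n : ℕ) (p : Fin n → ℝ) (hpos : ∀ i, 0 < p i) (hmono : StrictMono p)
    (x : Fin n → ℝ) (hx : ∑ i, x i = 0) :
    0 ≤ x ⬝ᵥ (Matrix.of fun i j : Fin n =>
      (p i + p j) * Real.log (p i + p j)).mulVec x := by
  have e : x ⬝ᵥ (Matrix.of fun i j : Fin n =>
      (p i + p j) * Real.log (p i + p j)).mulVec x =
      ∑ i, ∑ j, x i * x j * ((p i + p j + 0) * Real.log (p i + p j + 0)) := by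
    simp only [dotProduct, mulVec, Matrix.of_apply, Finset.mul_sum, add_zero]
    refine Finset.sum_congr rfl fun i _ => Finset.sum_congr rfl fun j _ => ?_
    ring
  rw [e]
  have hc : Continuous fun t : ℝ =>
      ∑ i, ∑ j, x i * x j * ((p i + p j + t) * Real.log (p i + p j + t)) := by
    refine continuous_finsetSum _ fun i _ => continuous_finsetSum _ fun j _ => ?_
    exact (Real.continuous_mul_log.comp (continuous_const.add continuous_id)).const_mul _
  have h0 := (hc.tendsto 0).mono_left (nhdsWithin_le_nhds (s := Set.Ioi 0))
  exact ge_of_tendsto h0 (eventually_nhdsWithin_of_forall fun t ht =>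
    aux_main n p x hpos hx t ht)
end

section
/- Let k_1 < k_2 < ... < k_n be positive integers and let K be the n×n matrix with (i,j) entry (k_i + k_j)^(k_i + k_j). Then for every real r > 0, the entrywise power K^{∘r} (with (i,j) entry (k_i + k_j)^{(k_i + k_j)r}) is strictly totally positive. -/
open Finset Filter Topology in
lemma aux_neg_of_mono (f : ℝ → ℝ) (hf : StrictMonoOn f (Set.Ici 0))
    (hl : Tendsto f atTop (𝓝 0)) (x : ℝ) (hx : 0 ≤ x) : f x < 0 := by
  have h1 : f x < f (x + 1) := hf hx (by simp; linarith) (by linarith)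
  have h2 : f (x + 1) ≤ 0 := by
    refine ge_of_tendsto hl ?_
    filter_upwards [eventually_ge_atTop (x + 1)] with y hy
    exact hf.monotoneOn (by simp; linarith) (by simp; linarith) hy
  linarith

open Finset Filter Topology in
lemma cauchy_pos (N : ℕ) (c : Fin N → ℝ) (hc : c ≠ 0) (C : ℝ) (hC : 1 < C) :
    0 < ∑ i, ∑ j, c i * c j / (C + i + j) := by
  have hint : ∀ i j : Fin N, IntervalIntegrable
      (fun y : ℝ => c i * c j * y ^ (C - 1 + ((i + j : ℕ) : ℝ))) MeasureTheory.volume 0 1 := by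
    intro i j
    apply IntervalIntegrable.const_mul
    apply intervalIntegral.intervalIntegrable_rpow'
    have : (0:ℝ) ≤ ((i + j : ℕ) : ℝ) := by positivity
    linarith
  have key : ∑ i, ∑ j, c i * c j / (C + i + j)
      = ∫ y in (0:ℝ)..1, y ^ (C - 1) * (∑ i, c i * y ^ (i : ℕ)) ^ 2 := by
    have h1 : ∫ y in (0:ℝ)..1, y ^ (C - 1) * (∑ i, c i * y ^ (i : ℕ)) ^ 2
        = ∫ y in (0:ℝ)..1, ∑ i, ∑ j, c i * c j * y ^ (C - 1 + ((i + j : ℕ) : ℝ)) := by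
      apply intervalIntegral.integral_congr
      intro y hy
      have hy0 : 0 ≤ y := by simp at hy; exact hy.1
      simp only
      rw [sq, Finset.sum_mul_sum, Finset.mul_sum]
      refine Finset.sum_congr rfl fun i _ => ?_
      rw [Finset.mul_sum]
      refine Finset.sum_congr rfl fun j _ => ?_
      have hne : C - 1 + ((i + j : ℕ) : ℝ) ≠ 0 := by
        have : (0:ℝ) ≤ ((i + j : ℕ) : ℝ) := by positivity
        linarith
      rw [Real.rpow_add_natCast' hy0 hne, pow_add]
      ring
    rw [h1, intervalIntegral.integral_finsetSum]
    · refine Finset.sum_congr rfl fun i _ => ?_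
      rw [intervalIntegral.integral_finsetSum]
      · refine Finset.sum_congr rfl fun j _ => ?_
        have hp : (0:ℝ) ≤ ((i + j : ℕ) : ℝ) := by positivity
        rw [intervalIntegral.integral_const_mul, integral_rpow (Or.inl (by linarith)),
          Real.one_rpow, Real.zero_rpow (by linarith)]
        push_cast
        rw [sub_zero, mul_one_div]
        congr 1
        ring
      · intro j _
        exact hint i j
    · intro i _
      have := IntervalIntegrable.sum Finset.univ (fun j _ => hint i j)
      have e : (∑ j, fun y : ℝ => c i * c j * y ^ (C - 1 + ((i + j : ℕ) : ℝ)))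
          = fun y : ℝ => ∑ j, c i * c j * y ^ (C - 1 + ((i + j : ℕ) : ℝ)) := by
        ext y
        simp
      rw [← e]
      exact this
  rw [key]
  apply intervalIntegral.integral_pos one_pos
  · apply ContinuousOn.mul
    · apply ContinuousOn.rpow_const continuousOn_id
      intro x _
      right; linarith
    · fun_prop
  · intro x hx
    have := hx.1
    positivity
  · by_contra! hcon
    apply hc
    let p : Polynomial ℝ := ∑ i : Fin N, Polynomial.C (c i) * Polynomial.X ^ (i : ℕ)
    have hp : p = 0 := by
      apply Polynomial.eq_zero_of_infinite_isRoot
      apply Set.Infinite.mono _ (Set.Ioo_infinite (zero_lt_one (α := ℝ)))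
      intro y hy
      have h := hcon y ⟨hy.1.le, hy.2.le⟩
      have hpos : 0 < y ^ (C - 1) := Real.rpow_pos_of_pos hy.1 _
      have h0 : (∑ i, c i * y ^ (i : ℕ)) ^ 2 ≤ 0 := by
        by_contra! h2
        have := mul_pos hpos h2
        linarith
      have h3 : ∑ i, c i * y ^ (i : ℕ) = 0 := by
        have := le_antisymm h0 (sq_nonneg _)
        exact pow_eq_zero_iff (two_ne_zero) |>.1 this
      simp [p, Polynomial.eval_finsetSum, h3]
    ext i
    have h := congrArg (fun q => Polynomial.coeff q (i : ℕ)) hp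
    simp only [p, Polynomial.finsetSum_coeff, Polynomial.coeff_C_mul, Polynomial.coeff_X_pow,
      Polynomial.coeff_zero] at h
    rw [Finset.sum_eq_single i] at h
    · simpa using h
    · intro b _ hb
      have : (i : ℕ) ≠ b := fun h => hb (Fin.ext h.symm)
      simp [this]
    · simp

open Finset Filter Topology in
lemma psi_pos (N : ℕ) (c : Fin N → ℝ) (hc : c ≠ 0) (hs : ∑ i, c i = 0) (C : ℝ) (hC : 1 < C) :
    0 < ∑ i, ∑ j, c i * c j * ((C + i + j) * Real.log (C + i + j)) := by
  have hcc : ∀ x : ℝ, ∑ i, ∑ j, c i * c j * x = 0 := by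
    intro x
    simp only [← Finset.sum_mul, ← Finset.mul_sum, hs]
    simp
  have hcl : ∑ i, ∑ j, c i * c j * (C + i + j) = 0 := by
    have : ∀ i j : Fin N, c i * c j * (C + i + j) = c i * (C + i) * c j + c i * (c j * j) := by
      intro i j; ring
    simp only [this, Finset.sum_add_distrib, ← Finset.sum_mul, ← Finset.mul_sum, hs]
    simp
  have hpos : ∀ (i j : Fin N) (t : ℝ), 0 ≤ t → 0 < C + i + j + t := by
    intro i j t ht
    have : (0:ℝ) ≤ (i : ℕ) := by positivity
    have : (0:ℝ) ≤ (j : ℕ) := by positivity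
    linarith
  let F : ℝ → ℝ := fun t => ∑ i, ∑ j, c i * c j * ((C + i + j + t) * Real.log (C + i + j + t))
  let G : ℝ → ℝ := fun t => ∑ i, ∑ j, c i * c j * Real.log (C + i + j + t)
  have hG : ∀ t, 0 ≤ t → HasDerivAt G (∑ i, ∑ j, c i * c j * (1 / (C + i + j + t))) t := by
    intro t ht
    refine HasDerivAt.fun_sum fun i _ => HasDerivAt.fun_sum fun j _ => ?_
    apply HasDerivAt.const_mul
    exact ((hasDerivAt_id t).const_add _).log (hpos i j t ht).ne'
  have hF : ∀ t, 0 ≤ t → HasDerivAt F (G t) t := by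
    intro t ht
    have : G t = ∑ i, ∑ j, c i * c j * (Real.log (C + i + j + t) + 1) := by
      simp only [mul_add, Finset.sum_add_distrib, hcc, G, add_zero]
    rw [this]
    refine HasDerivAt.fun_sum fun i _ => HasDerivAt.fun_sum fun j _ => ?_
    apply HasDerivAt.const_mul
    have h1 := (hasDerivAt_id t).const_add (C + i + j : ℝ)
    have h2 := h1.mul (h1.log (hpos i j t ht).ne')
    have h3 : Real.log (C + i + j + t) + 1 = 1 * Real.log (C + i + j + id t)
        + (C + i + j + id t) * (1 / (C + i + j + id t)) := by
      have := (hpos i j t ht).ne'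
      simp only [id]
      field_simp
    rw [h3]
    exact h2
  have hlog1 : ∀ x : ℝ, Tendsto (fun t : ℝ => Real.log (1 + x / t)) atTop (𝓝 0) := by
    intro x
    have h1 : Tendsto (fun t : ℝ => 1 + x / t) atTop (𝓝 (1 + 0)) :=
      tendsto_const_nhds.add (tendsto_const_nhds.div_atTop tendsto_id)
    rw [add_zero] at h1
    have := (Real.continuousAt_log one_ne_zero).tendsto.comp h1
    rw [Real.log_one] at this
    exact this
  have hsplit : ∀ (i j : Fin N) (t : ℝ), 0 < t →
      Real.log (C + i + j + t) = Real.log (1 + (C + i + j) / t) + Real.log t := by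
    intro i j t ht
    have h0 := hpos i j 0 le_rfl
    rw [← Real.log_mul (by positivity) ht.ne']
    congr 1
    field_simp
    ring
  have hGl : Tendsto G atTop (𝓝 0) := by
    have h1 : Tendsto (fun t => ∑ i, ∑ j, c i * c j * Real.log (1 + (C + i + j) / t)) atTop
        (𝓝 (∑ i : Fin N, ∑ j : Fin N, c i * c j * 0)) :=
      tendsto_finsetSum _ fun i _ => tendsto_finsetSum _ fun j _ => (hlog1 _).const_mul _
    rw [hcc] at h1
    refine h1.congr' ?_
    filter_upwards [eventually_gt_atTop 0] with t ht
    simp only [G]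
    simp only [hsplit _ _ t ht, mul_add, Finset.sum_add_distrib, hcc, add_zero]
  have hFl : Tendsto F atTop (𝓝 0) := by
    have h1 : Tendsto (fun t => ∑ i, ∑ j, c i * c j * ((C + i + j) * Real.log (1 + (C + i + j) / t)
        + t * Real.log (1 + (C + i + j) / t))) atTop
        (𝓝 (∑ i : Fin N, ∑ j : Fin N, c i * c j * ((C + i + j) * 0 + (C + i + j)))) :=
      tendsto_finsetSum _ fun i _ => tendsto_finsetSum _ fun j _ =>
        (((hlog1 _).const_mul _).add (Real.tendsto_mul_log_one_add_div_atTop _)).const_mul _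
    simp only [mul_zero, zero_add, hcl] at h1
    refine h1.congr' ?_
    filter_upwards [eventually_gt_atTop 0] with t ht
    simp only [F]
    have e : ∀ i j : Fin N, c i * c j * ((C + i + j + t) * Real.log (C + i + j + t))
        = c i * c j * ((C + i + j) * Real.log (1 + (C + i + j) / t)
        + t * Real.log (1 + (C + i + j) / t)) + c i * c j * (C + i + j) * Real.log t
        + c i * c j * (t * Real.log t) := by
      intro i j
      rw [hsplit i j t ht]; ring
    simp only [e, Finset.sum_add_distrib, hcc, add_zero]
    simp only [← Finset.sum_mul, hcl]
    simp
  have hGm : StrictMonoOn G (Set.Ici 0) := by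
    apply strictMonoOn_of_deriv_pos (convex_Ici 0)
    · intro t ht
      exact (hG t ht).continuousAt.continuousWithinAt
    · intro t ht
      rw [interior_Ici] at ht
      rw [(hG t (le_of_lt ht)).deriv]
      have := cauchy_pos N c hc (C + t) (by have : 0 < t := ht; linarith)
      convert this using 5 with i _ j _
      rw [mul_one_div]
      congr 1
      ring
  have hGneg := aux_neg_of_mono G hGm hGl
  have hFm : StrictAntiOn F (Set.Ici 0) := by
    apply strictAntiOn_of_deriv_neg (convex_Ici 0)
    · intro t ht
      exact (hF t ht).continuousAt.continuousWithinAt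
    · intro t ht
      rw [interior_Ici] at ht
      rw [(hF t (le_of_lt ht)).deriv]
      exact hGneg t (le_of_lt ht)
  have h := aux_neg_of_mono (fun t => - F t) (fun x hx y hy h => neg_lt_neg (hFm hx hy h))
    (by simpa using hFl.neg) 0 le_rfl
  simp only [F, add_zero] at h
  linarith

lemma exp_posDef (l : ℕ) (Q : Matrix (Fin l) (Fin l) ℝ) (hQ : Q.PosDef) :
    (Matrix.of fun i j => Real.exp (Q i j)).PosDef := by
  have hsym : ∀ i j, Q i j = Q j i := fun i j => by
    have := hQ.1.apply j i
    simpa using this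
  have hpow : ∀ k : ℕ, (Matrix.of fun i j => Q i j ^ k).PosSemidef := by
    intro k
    induction k with
    | zero =>
      refine Matrix.PosSemidef.of_dotProduct_mulVec_nonneg ?_ ?_
      · ext i j; simp
      · intro x
        have : star x ⬝ᵥ ((Matrix.of fun i j => Q i j ^ 0).mulVec x) = (∑ i, x i) ^ 2 := by
          simp [dotProduct, Matrix.mulVec, sq, Finset.sum_mul]
        rw [this]
        positivity
    | succ k ih =>
      have := ih.hadamard hQ.posSemidef
      have e : (Matrix.of fun i j => Q i j ^ (k + 1))
          = (Matrix.of fun i j => Q i j ^ k).hadamard Q := by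
        ext i j
        simp [pow_succ]
      rw [e]
      exact this
  refine Matrix.PosDef.of_dotProduct_mulVec_pos ?_ ?_
  · ext i j; simp [hsym i j]
  · intro x hx
    have e : ∀ M : Matrix (Fin l) (Fin l) ℝ,
        star x ⬝ᵥ (M.mulVec x) = ∑ i, ∑ j, x i * x j * M i j := by
      intro M
      simp only [dotProduct, Matrix.mulVec, Finset.mul_sum]
      refine Finset.sum_congr rfl fun i _ => Finset.sum_congr rfl fun j _ => ?_
      simp; ring
    have h1 := hQ.dotProduct_mulVec_pos hx
    rw [e] at h1 ⊢
    have hsum : HasSum (fun k : ℕ => ∑ i, ∑ j, x i * x j * (Q i j ^ k / k.factorial))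
        (∑ i, ∑ j, x i * x j * Real.exp (Q i j)) := by
      refine hasSum_sum fun i _ => hasSum_sum fun j _ => ?_
      apply HasSum.mul_left
      rw [Real.exp_eq_exp_ℝ]
      exact NormedSpace.expSeries_div_hasSum_exp (Q i j)
    have hnn : ∀ k : ℕ, 0 ≤ ∑ i, ∑ j, x i * x j * (Q i j ^ k / k.factorial) := by
      intro k
      have h := (hpow k).dotProduct_mulVec_nonneg x
      rw [e] at h
      simp only [Matrix.of_apply] at h
      simp only [← mul_div_assoc, ← Finset.sum_div]
      positivity
    have := le_hasSum hsum 1 (fun k _ => hnn k)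
    simp only [Matrix.of_apply]
    refine lt_of_lt_of_le h1 (le_trans (le_of_eq ?_) this)
    simp

lemma hankel_det_pos (r : ℝ) (hr : 0 < r) (l : ℕ) (C : ℝ) (hC : 1 < C) :
    0 < (Matrix.of fun i j : Fin l =>
      Real.exp (r * ((C + i + j) * Real.log (C + i + j)))).det := by
  let ψ : ℝ → ℝ := fun s => s * Real.log s
  let P : Matrix (Fin l) (Fin l) ℝ := Matrix.of fun i j =>
    r * (ψ (C + i + j) - ψ (C + i + l) - ψ (C + j + l) + ψ (C + l + l))
  have hP : P.PosDef := by
    refine Matrix.PosDef.of_dotProduct_mulVec_pos ?_ ?_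
    · ext i j
      simp only [P, Matrix.conjTranspose_apply, Matrix.of_apply, star_trivial]
      rw [show C + (j : ℝ) + i = C + i + j by ring]
      ring
    · intro x hx
      have h := psi_pos (l + 1) (Fin.snoc x (- ∑ i, x i) : Fin (l + 1) → ℝ) ?_ ?_ C hC
      · have e : star x ⬝ᵥ (P.mulVec x) = r * ∑ i : Fin (l + 1), ∑ j : Fin (l + 1),
            (Fin.snoc x (- ∑ i, x i) : Fin (l + 1) → ℝ) i *
            (Fin.snoc x (- ∑ i, x i) : Fin (l + 1) → ℝ) j *
            ψ (C + i + j) := by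
          simp only [Fin.sum_univ_castSucc, Fin.snoc_castSucc, Fin.snoc_last, Fin.val_castSucc,
            Fin.val_last]
          have e1 : star x ⬝ᵥ (P.mulVec x) = r * (∑ i, ∑ j, (x i * x j * ψ (C + i + j)
              - x i * ψ (C + i + l) * x j - x i * (x j * ψ (C + j + l))
              + x i * x j * ψ (C + l + l))) := by
            simp only [dotProduct, Matrix.mulVec, Finset.mul_sum]
            refine Finset.sum_congr rfl fun i _ => Finset.sum_congr rfl fun j _ => ?_
            simp only [P, Matrix.of_apply, Pi.star_apply, star_trivial]; ring
          rw [e1]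
          congr 1
          simp only [Finset.sum_add_distrib, Finset.sum_sub_distrib, ← Finset.sum_mul,
            ← Finset.mul_sum]
          have e2 : ∑ i : Fin l, x i * (-∑ i, x i) * ψ (C + i + l)
              = (∑ i : Fin l, x i * ψ (C + i + l)) * (-∑ i, x i) := by
            rw [Finset.sum_mul]
            exact Finset.sum_congr rfl fun i _ => by ring
          have e3 : ∑ i : Fin l, (-∑ i, x i) * x i * ψ (C + l + i)
              = (∑ i : Fin l, x i * ψ (C + i + l)) * (-∑ i, x i) := by
            rw [Finset.sum_mul]
            refine Finset.sum_congr rfl fun i _ => ?_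
            rw [show C + (l : ℝ) + i = C + i + l by ring]
            ring
          rw [e2, e3]
          ring
        rw [e]
        exact mul_pos hr h
      · intro h0
        apply hx
        ext i
        have := congrFun h0 i.castSucc
        simpa using this
      · simp [Fin.sum_univ_castSucc]
  have hd := (exp_posDef l P hP).det_pos
  let d : Fin l → ℝ := fun i => Real.exp (r * (ψ (C + i + l) - ψ (C + l + l) / 2))
  have hM : (Matrix.of fun i j : Fin l =>
      Real.exp (r * ((C + i + j) * Real.log (C + i + j)))) =
      Matrix.of fun i j => d i * (Matrix.of fun i j => d j *
        (Matrix.of fun i j => Real.exp (P i j)) i j) i j := by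
    ext i j
    simp only [Matrix.of_apply, d, P, ← Real.exp_add]
    congr 1
    simp only [ψ]
    ring
  rw [hM, Matrix.det_mul_column, Matrix.det_mul_row]
  have : 0 < ∏ i, d i := Finset.prod_pos fun i _ => Real.exp_pos _
  positivity

/-- Differences of consecutive rows after normalizing the first column. -/
noncomputable def rowDiff (A : ℕ → ℕ → ℝ) (t q : ℕ) : ℝ :=
  A (t + 1) (q + 1) / A (t + 1) 0 - A t (q + 1) / A t 0

lemma det_rowDiff (A : ℕ → ℕ → ℝ) (hA : ∀ t, 0 < A t 0) (l : ℕ) (i : Fin (l + 1) → ℕ)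
    (hi : StrictMono i) :
    (Matrix.of fun p q : Fin (l + 1) => A (i p) q).det =
      (∏ p, A (i p) 0) * (Matrix.of fun p q : Fin l =>
        ∑ t ∈ Finset.Ico (i p.castSucc) (i p.succ), rowDiff A t q).det := by
  have h1 : (Matrix.of fun p q : Fin (l + 1) => A (i p) q) =
      Matrix.of fun p q => A (i p) 0 *
        (Matrix.of fun p q : Fin (l + 1) => A (i p) q / A (i p) 0) p q := by
    ext p q
    have := (hA (i p)).ne'
    simp only [Matrix.of_apply]
    field_simp
  rw [h1, Matrix.det_mul_column]
  congr 1
  let B : Matrix (Fin (l + 1)) (Fin (l + 1)) ℝ := Matrix.of fun p q =>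
    Fin.cases (A (i 0) q / A (i 0) 0)
      (fun pp : Fin l => A (i pp.succ) q / A (i pp.succ) 0
        - A (i pp.castSucc) q / A (i pp.castSucc) 0) p
  rw [Matrix.det_eq_of_forall_row_eq_smul_add_pred (B := B) (fun _ => 1)]
  · rw [Matrix.det_succ_column_zero, Fin.sum_univ_succ]
    have hz : ∀ p : Fin l, B p.succ 0 = 0 := by
      intro p
      simp [B, (hA _).ne']
    have ho : B 0 0 = 1 := by simp [B, (hA _).ne']
    simp only [hz, ho]
    simp only [mul_zero, zero_mul, Finset.sum_const_zero, add_zero, Fin.val_zero, pow_zero,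
      one_mul]
    congr 1
    ext p q
    have hle : i p.castSucc ≤ i p.succ := (hi (Fin.castSucc_lt_succ)).le
    simp only [Matrix.submatrix_apply, Matrix.of_apply, B, Fin.zero_succAbove, Fin.cases_succ,
      rowDiff, Fin.val_succ]
    exact (Finset.sum_Ico_sub (fun t => A t (q + 1) / A t 0) hle).symm
  · intro j
    simp [B]
  · intro p q
    simp [B]

lemma fekete (m : ℕ) : ∀ A : ℕ → ℕ → ℝ,
    (∀ l ≤ m, ∀ a : ℕ, 0 < (Matrix.of fun p q : Fin l => A (a + p) q).det) →
    ∀ i : Fin m → ℕ, StrictMono i → 0 < (Matrix.of fun p q : Fin m => A (i p) q).det := by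
  induction m with
  | zero => intro A _ i _; simp
  | succ m ih =>
    intro A hA i hi
    have hA0 : ∀ t, 0 < A t 0 := by
      intro t
      have := hA 1 (by omega) t
      simpa using this
    have hB : ∀ l ≤ m, ∀ a : ℕ, 0 < (Matrix.of fun p q : Fin l => rowDiff A (a + p) q).det := by
      intro l hl a
      have h := hA (l + 1) (by omega) a
      rw [det_rowDiff A hA0 l (fun p => a + p) (fun p q h => by simpa using h)] at h
      have hp : 0 < ∏ p : Fin (l + 1), A (a + p) 0 := Finset.prod_pos fun p _ => hA0 _
      have h2 := pos_of_mul_pos_right h hp.le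
      refine lt_of_lt_of_eq h2 (congrArg Matrix.det ?_)
      ext p q
      have : a + ((p : ℕ) + 1) = a + p + 1 := by ring
      simp [this]
    rw [det_rowDiff A hA0 m i hi]
    refine mul_pos (Finset.prod_pos fun p _ => hA0 _) ?_
    have hexp := (Matrix.detRowAlternating (R := ℝ) (n := Fin m)).toMultilinearMap.map_sum_finset
      (fun (_ : Fin m) (t : ℕ) (q : Fin m) => rowDiff A t q)
      (fun p : Fin m => Finset.Ico (i p.castSucc) (i p.succ))
    have e : (Matrix.of fun p q : Fin m =>
        ∑ t ∈ Finset.Ico (i p.castSucc) (i p.succ), rowDiff A t q).det =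
        ∑ s ∈ Fintype.piFinset (fun p : Fin m => Finset.Ico (i p.castSucc) (i p.succ)),
          (Matrix.of fun p q : Fin m => rowDiff A (s p) q).det := by
      refine Eq.trans ?_ hexp
      show Matrix.det _ = Matrix.det _
      congr 1
      ext p q
      simp
    rw [e]
    apply Finset.sum_pos
    · intro s hs
      rw [Fintype.mem_piFinset] at hs
      apply ih (rowDiff A) hB
      intro p q hpq
      have h1 := (Finset.mem_Ico.1 (hs p)).2
      have h2 := (Finset.mem_Ico.1 (hs q)).1
      have h3 : i p.succ ≤ i q.castSucc := hi.monotone (by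
        rw [Fin.le_def]; simp; exact hpq)
      omega
    · rw [Fintype.piFinset_nonempty]
      intro p
      rw [Finset.nonempty_Ico]
      exact hi Fin.castSucc_lt_succ

/-- For positive integers `k₁ < … < kₙ` and real `r > 0`, the entrywise power
`K^{∘r}` of `K = [(kᵢ + kⱼ)^(kᵢ + kⱼ)]` is strictly totally positive. -/
theorem stmt_14 (n : ℕ) (k : Fin n → ℕ) (hpos : ∀ i, 0 < k i) (hmono : StrictMono k)
    (r : ℝ) (hr : 0 < r)
    (m : ℕ) (f g : Fin m → Fin n) (hf : StrictMono f) (hg : StrictMono g) :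
    0 < ((Matrix.of fun i j : Fin n =>
        ((k i + k j : ℕ) : ℝ) ^ (((k i + k j : ℕ) : ℝ) * r)).submatrix f g).det := by
  let φ : ℝ → ℝ := fun s => Real.exp (r * (s * Real.log s))
  let A : ℕ → ℕ → ℝ := fun p q => φ ((p + q + 2 : ℕ) : ℝ)
  -- minors with arbitrary rows and consecutive columns
  have step1 : ∀ (l b : ℕ) (i : Fin l → ℕ), StrictMono i →
      0 < (Matrix.of fun p q : Fin l => A (i p) (b + q)).det := by
    intro l b i hi
    refine fekete l (fun p q => A p (b + q)) ?_ i hi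
    intro ll _ a
    have h := hankel_det_pos r hr ll ((a + b + 2 : ℕ) : ℝ) (by push_cast; linarith
      [(Nat.cast_nonneg a : (0:ℝ) ≤ a), (Nat.cast_nonneg b : (0:ℝ) ≤ b)])
    convert h using 3
    ext p q
    simp only [A, φ]
    have : ((a + p + (b + q) + 2 : ℕ) : ℝ) = ((a + b + 2 : ℕ) : ℝ) + p + q := by
      push_cast; ring
    rw [this]
  have step2 : ∀ (i j : Fin m → ℕ), StrictMono i → StrictMono j →
      0 < (Matrix.of fun p q : Fin m => A (i p) (j q)).det := by
    intro i j hi hj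
    let ii : ℕ → ℕ := fun p => if h : p < m then i ⟨p, h⟩ else 0
    have h := fekete m (fun q p => A (ii p) q) ?_ j hj
    · rw [← Matrix.det_transpose]
      convert h using 3
      ext p q
      simp [ii]
    · intro l hl b
      have h := step1 l b (fun p => i (Fin.castLE hl p))
        (fun p q h => hi (by simpa using h))
      rw [← Matrix.det_transpose] at h
      convert h using 3
      ext p q
      have : (q : ℕ) < m := by omega
      simp [ii, this]
      rfl
  have h := step2 (fun p => k (f p) - 1) (fun p => k (g p) - 1)
    (fun p q h => by
      have := hmono (hf h); have := hpos (f p); have := hpos (f q); simp only; omega)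
    (fun p q h => by
      have := hmono (hg h); have := hpos (g p); have := hpos (g q); simp only; omega)
  convert h using 3
  ext p q
  have h1 := hpos (f p)
  have h2 := hpos (g q)
  simp only [Matrix.submatrix_apply, Matrix.of_apply, A, φ]
  rw [show k (f p) - 1 + (k (g q) - 1) + 2 = k (f p) + k (g q) by omega]
  rw [Real.rpow_def_of_pos (by exact_mod_cast (by omega : 0 < k (f p) + k (g q)))]
  congr 1
  ring
end
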